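/- arXiv:2408.07275 — 3 statements merged into one kernel-verified Lean document; each statement's English description precedes it below -/
import Mathlib

section
/- Let n ≥ 1 and let Y_1, Y_2, … be real numbers. Suppose that B_k(Y_1, …, Y_k) ≤ 0 for all 1 ≤ k ≤ n+1 (where B_k denotes the k-th complete exponential Bell polynomial), and that Y_k ≤ -(k-1)!·(-Y_1)^k ≤ 0 for all 1 ≤ k ≤ n. Then Y_{n+1} ≤ n·Y_1·(-Y_n), and consequently Y_{n+1} ≤ -n!·(-Y_1)^{n+1}. -/
/-!
Isolating the last two terms of the recurrence, and using `B_0 = 1`, `B_1 = Y_1`, gives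
`B_{n+1} = Y_{n+1} + n * Y_1 * Y_n + ∑_{i < n-1} (n choose i) * B_{n-i} * Y_{i+1}`.
Each remaining summand is nonnegative, since `B_{n-i}` and `Y_{i+1}` are both nonpositive, so
`B_{n+1} ≤ 0` yields the first inequality. The second follows by multiplying the bound on `Y_n`
by `n * (-Y_1) ≥ 0`.
-/

/-- The complete exponential Bell polynomials: B_0 = 1 and
B_{n+1}(X_1, ..., X_{n+1}) = sum_{i=0}^{n} (n choose i) * B_{n-i}(X_1, ..., X_{n-i}) * X_{i+1}.
The argument `X k` plays the role of the variable X_k (the value `X 0` is irrelevant). -/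
noncomputable def bellPoly (X : ℕ → ℝ) : ℕ → ℝ
  | 0 => 1
  | n + 1 => ∑ i ∈ Finset.range (n + 1),
      (n.choose i : ℝ) * bellPoly X (n - i) * X (i + 1)
  decreasing_by omega

/-- Induction step: if the Bell polynomials of Y are nonpositive up to order n+1 and
Y_k ≤ -(k-1)! * (-Y_1)^k ≤ 0 for 1 ≤ k ≤ n, then Y_{n+1} ≤ n * Y_1 * (-Y_n),
and consequently Y_{n+1} ≤ -n! * (-Y_1)^(n+1). -/
theorem stmt_1 (n : ℕ) (hn : 1 ≤ n) (Y : ℕ → ℝ)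
    (hB : ∀ k : ℕ, 1 ≤ k → k ≤ n + 1 → bellPoly Y k ≤ 0)
    (hY : ∀ k : ℕ, 1 ≤ k → k ≤ n →
      Y k ≤ -((k - 1).factorial : ℝ) * (-Y 1) ^ k ∧
        -((k - 1).factorial : ℝ) * (-Y 1) ^ k ≤ 0) :
    Y (n + 1) ≤ (n : ℝ) * Y 1 * (-Y n) ∧
      Y (n + 1) ≤ -(n.factorial : ℝ) * (-Y 1) ^ (n + 1) := by
  obtain ⟨m, rfl⟩ : ∃ m, n = m + 1 := ⟨n - 1, by omega⟩
  have hY0 : ∀ k, 1 ≤ k → k ≤ m + 1 → Y k ≤ 0 := fun k h1 h2 =>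
    (hY k h1 h2).1.trans (hY k h1 h2).2
  have hY1 : Y 1 ≤ 0 := hY0 1 le_rfl (by omega)
  have hB1 : bellPoly Y 1 = Y 1 := by
    rw [bellPoly]
    simp [bellPoly]
  have hrest : 0 ≤ ∑ i ∈ Finset.range m,
      ((m + 1).choose i : ℝ) * bellPoly Y (m + 1 - i) * Y (i + 1) := by
    refine Finset.sum_nonneg fun i hi => ?_
    have hi' := Finset.mem_range.mp hi
    have h1 : bellPoly Y (m + 1 - i) ≤ 0 := hB _ (by omega) (by omega)
    have h2 : Y (i + 1) ≤ 0 := hY0 _ (by omega) (by omega)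
    exact mul_nonneg_of_nonpos_of_nonpos
      (mul_nonpos_of_nonneg_of_nonpos (Nat.cast_nonneg _) h1) h2
  have htop : bellPoly Y (m + 1 + 1) ≤ 0 := hB _ (by omega) le_rfl
  rw [bellPoly, Finset.sum_range_succ, Finset.sum_range_succ] at htop
  have hch : (m + 1).choose m = m + 1 := Nat.choose_succ_self_right m
  have hsub : m + 1 - m = 1 := by omega
  rw [hch, hsub, hB1, Nat.choose_self, Nat.sub_self, bellPoly, Nat.cast_one] at htop
  have hfirst : Y (m + 1 + 1) ≤ ((m + 1 : ℕ) : ℝ) * Y 1 * (-Y (m + 1)) := by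
    linarith
  refine ⟨hfirst, hfirst.trans ?_⟩
  have hYn := (hY (m + 1) (by omega) le_rfl).1
  rw [Nat.add_sub_cancel] at hYn
  have hcoef : 0 ≤ ((m + 1 : ℕ) : ℝ) * (-Y 1) :=
    mul_nonneg (Nat.cast_nonneg _) (by linarith)
  calc ((m + 1 : ℕ) : ℝ) * Y 1 * (-Y (m + 1))
      = ((m + 1 : ℕ) : ℝ) * (-Y 1) * Y (m + 1) := by ring
    _ ≤ ((m + 1 : ℕ) : ℝ) * (-Y 1) * (-(m.factorial : ℝ) * (-Y 1) ^ (m + 1)) :=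
        mul_le_mul_of_nonneg_left hYn hcoef
    _ = -((m + 1).factorial : ℝ) * (-Y 1) ^ (m + 1 + 1) := by
        rw [Nat.factorial_succ, Nat.cast_mul]
        ring
end

section
/- Let y : ℝ → ℝ be a C^∞ function and let m ≥ 1. Then the m-th derivative of the function t ↦ e^{y(t)} satisfies, for every t ∈ ℝ, (d^m/dt^m) e^{y(t)} = e^{y(t)} · B_m(y'(t), y''(t), …, y^{(m)}(t)), where B_m denotes the m-th complete exponential Bell polynomial. -/
/-- Faà di Bruno for the exponential: for a C^∞ function y and m ≥ 1,
(d^m/dt^m) exp (y t) = exp (y t) * B_m(y'(t), y''(t), ..., y^(m)(t)). -/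
theorem stmt_3 (y : ℝ → ℝ) (hy : ContDiff ℝ (⊤ : ℕ∞) y) (m : ℕ) (hm : 1 ≤ m) (t : ℝ) :
    iteratedDeriv m (fun s => Real.exp (y s)) t =
      Real.exp (y t) * bellPoly (fun k => iteratedDeriv k y t) m := by
  clear hm
  have hf : ContDiff ℝ (⊤ : ℕ∞) fun s => Real.exp (y s) := hy.exp
  have hd : deriv (fun s => Real.exp (y s)) = deriv y * fun s => Real.exp (y s) := by
    funext s
    rw [deriv_exp (hy.differentiable (by simp) s), Pi.mul_apply, mul_comm]
  have hy' : ContDiff ℝ (⊤ : ℕ∞) (deriv y) := (contDiff_infty_iff_deriv.1 hy).2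
  induction m using Nat.strong_induction_on with
  | _ m ih =>
    cases m with
    | zero => simp [bellPoly]
    | succ n =>
      have hn : ((n : ℕ∞) : WithTop ℕ∞) ≤ ((⊤ : ℕ∞) : WithTop ℕ∞) := by
        exact_mod_cast le_top
      rw [iteratedDeriv_succ', hd,
        iteratedDeriv_mul (hy'.of_le hn).contDiffAt (hf.of_le hn).contDiffAt,
        bellPoly, Finset.mul_sum]
      refine Finset.sum_congr rfl fun i _ => ?_
      rw [ih (n - i) (by omega), iteratedDeriv_succ']
      ring
end

section
/- Let M ∈ ℕ, let σ > 0, and let y : ℝ → ℝ be a C^∞ function on (0, ∞) such that: (i) for every 1 ≤ m ≤ M and every t > 0, (-1)^{m-1} · (d^m/dt^m) e^{y(t)} ≥ 0; and (ii) for every t > 0, y'(t) ≥ 1/(σ² + t). Then for every 1 ≤ m ≤ M and every t > 0, (-1)^{m-1} · y^{(m)}(t) ≥ (m-1)! / (σ² + t)^m. (This is the statement that the entropy power conjecture up to order M implies the McKean conjecture up to order M, expressed for the function y(t) = -2H(μ_t)/D along the heat flow, where hypothesis (i) is the concavity pattern of the entropy power N(t) = e^{y(t)} and hypothesis (ii)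 is the Cramér–Rao lower bound on the normalized Fisher information y'(t) when μ_0 has covariance σ²·I_D.) -/
/-!
Write `N = exp ∘ y`, so that `N' = N y'`. Applying the Leibniz rule to the `n`-th derivative of this
identity and solving for the term that contains `y^(n+1)` gives
`(-1)^n N y^(n+1) = (-1)^n N^(n+1) + ∑_{k < n} C(n,k) [(-1)^(n-k-1) N^(n-k)] [(-1)^k y^(k+1)]`.
By hypothesis `N` has the alternating sign pattern, so by strong induction all terms on the right are
nonnegative. Keeping only `k = n - 1`, whose factor `N'` equals `N y'`, yields
`(-1)^n y^(n+1) ≥ n y' (-1)^(n-1) y^(n)`, and the Cramér–Rao bound on `y'` together with the bound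
for `y^(n)` closes the induction.
-/

/-- The Leibniz rule for the `n`-th derivative of `(exp ∘ y)' = (exp ∘ y) y'` on `(0, ∞)`. -/
lemma iteratedDerivWithin_succ_exp_comp {y : ℝ → ℝ}
    (hy : ContDiffOn ℝ (⊤ : ℕ∞) y (Set.Ioi 0)) (n : ℕ) {t : ℝ} (ht : 0 < t) :
    iteratedDerivWithin (n + 1) (fun s => Real.exp (y s)) (Set.Ioi 0) t =
      ∑ k ∈ Finset.range (n + 1), (n.choose k : ℝ) *
        iteratedDerivWithin k (fun s => Real.exp (y s)) (Set.Ioi 0) t *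
        iteratedDerivWithin (n - k + 1) y (Set.Ioi 0) t := by
  have hu : UniqueDiffOn ℝ (Set.Ioi (0 : ℝ)) := uniqueDiffOn_Ioi 0
  have hN : ContDiffOn ℝ (⊤ : ℕ∞) (fun s => Real.exp (y s)) (Set.Ioi 0) := hy.exp
  have hd : ContDiffOn ℝ (⊤ : ℕ∞) (derivWithin y (Set.Ioi 0)) (Set.Ioi 0) :=
    hy.derivWithin hu (by norm_cast)
  have hEq : Set.EqOn (derivWithin (fun s => Real.exp (y s)) (Set.Ioi 0))
      ((fun s => Real.exp (y s)) * derivWithin y (Set.Ioi 0)) (Set.Ioi 0) := fun s hs =>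
    ((hy.differentiableOn (by simp) s hs).hasDerivWithinAt.exp).derivWithin (hu s hs)
  have hn : ((n : ℕ∞) : WithTop ℕ∞) ≤ ((⊤ : ℕ∞) : WithTop ℕ∞) := by exact_mod_cast le_top
  rw [iteratedDerivWithin_succ', iteratedDerivWithin_congr hEq ht,
    iteratedDerivWithin_mul (s := Set.Ioi 0) ht hu ((hN t ht).of_le hn) ((hd t ht).of_le hn)]
  simp only [iteratedDerivWithin_succ']

/-- Entropy power conjecture up to order M implies McKean conjecture up to order M:
if y is C^∞ on (0, ∞), the derivatives of the entropy power exp (y t) up to order M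
alternate in sign, and y'(t) ≥ 1/(σ^2 + t) (Cramér–Rao), then
(-1)^(m-1) * y^(m)(t) ≥ (m-1)! / (σ^2 + t)^m for all 1 ≤ m ≤ M and t > 0. -/
theorem stmt_6 (M : ℕ) (σ : ℝ) (hσ : 0 < σ) (y : ℝ → ℝ)
    (hy : ContDiffOn ℝ (⊤ : ℕ∞) y (Set.Ioi 0))
    (hEP : ∀ m : ℕ, 1 ≤ m → m ≤ M → ∀ t : ℝ, 0 < t →
      0 ≤ (-1 : ℝ) ^ (m - 1) *
        iteratedDerivWithin m (fun s => Real.exp (y s)) (Set.Ioi 0) t)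
    (hCR : ∀ t : ℝ, 0 < t → 1 / (σ ^ 2 + t) ≤ derivWithin y (Set.Ioi 0) t) :
    ∀ m : ℕ, 1 ≤ m → m ≤ M → ∀ t : ℝ, 0 < t →
      ((m - 1).factorial : ℝ) / (σ ^ 2 + t) ^ m ≤
        (-1 : ℝ) ^ (m - 1) * iteratedDerivWithin m y (Set.Ioi 0) t := by
  intro m hm hmM t ht
  have hpos : 0 < σ ^ 2 + t := by positivity
  induction m using Nat.strong_induction_on with
  | _ m ih =>
  obtain rfl | ⟨n, rfl⟩ : m = 1 ∨ ∃ n, m = n + 2 := by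
    rcases m with _ | _ | n
    · omega
    · exact Or.inl rfl
    · exact Or.inr ⟨n, rfl⟩
  · simpa [iteratedDerivWithin_one] using hCR t ht
  have hL := iteratedDerivWithin_succ_exp_comp hy (n + 1) ht
  have hL1 := iteratedDerivWithin_succ_exp_comp hy 0 ht
  have hE := hEP (n + 2) hm hmM t ht
  have hi := ih (n + 1) (by omega) (by omega) (by omega)
  have hc := hCR t ht
  -- The terms in which `exp ∘ y` is differentiated at least twice have a definite sign.
  have hS : 0 ≤ -(-1 : ℝ) ^ (n + 1) * ∑ k ∈ Finset.range n, ((n + 1).choose (k + 1 + 1) : ℝ) *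
        iteratedDerivWithin (k + 1 + 1) (fun s => Real.exp (y s)) (Set.Ioi 0) t *
        iteratedDerivWithin (n + 1 - (k + 1 + 1) + 1) y (Set.Ioi 0) t := by
    rw [Finset.mul_sum]
    refine Finset.sum_nonneg fun k hk => ?_
    obtain ⟨j, rfl⟩ := Nat.exists_eq_add_of_lt (Finset.mem_range.mp hk)
    have h1 := hEP (k + 1 + 1) (by omega) (by omega) t ht
    have h2 := ih (j + 1) (by omega) (by omega) (by omega)
    have h3 := (show (0 : ℝ) ≤ _ by positivity).trans h2
    have e : k + j + 1 + 1 - (k + 1 + 1) + 1 = j + 1 := by omega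
    rw [e]
    simp only [Nat.add_sub_cancel] at h1 h3
    have h4 := mul_nonneg (Nat.cast_nonneg (α := ℝ) ((k + j + 1 + 1).choose (k + 1 + 1)))
      (mul_nonneg h1 h3)
    refine h4.trans_eq ?_
    ring
  rw [Finset.sum_range_succ', Finset.sum_range_succ'] at hL
  simp only [Finset.sum_range_one, iteratedDerivWithin_zero, iteratedDerivWithin_one, zero_add,
    Nat.choose_zero_right, Nat.choose_one_right, Nat.sub_zero, Nat.add_sub_cancel, Nat.cast_one,
    one_mul] at hL hL1
  simp only [hL1] at hL
  have e2 : n + 2 - 1 = n + 1 := rfl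
  rw [e2] at hE ⊢
  rw [show n + 2 = n + 1 + 1 from rfl] at hE ⊢
  simp only [Nat.add_sub_cancel] at hi
  rw [hL] at hE
  have hNpos := Real.exp_pos (y t)
  generalize Real.exp (y t) = N at *
  generalize iteratedDerivWithin (n + 1) y (Set.Ioi 0) t = A at *
  generalize iteratedDerivWithin (n + 1 + 1) y (Set.Ioi 0) t = B at *
  generalize derivWithin y (Set.Ioi 0) t = D at *
  have hprod := mul_le_mul hc hi (by positivity) ((by positivity : 0 ≤ 1 / (σ ^ 2 + t)).trans hc)
  have hkey : 0 ≤ N * ((-1 : ℝ) ^ (n + 1) * B - (n + 1) * (D * ((-1 : ℝ) ^ n * A))) := by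
    rw [Nat.cast_succ n] at hE
    refine (add_nonneg hE hS).trans_eq ?_
    ring
  have hkey' := nonneg_of_mul_nonneg_right hkey hNpos
  calc ((n + 1).factorial : ℝ) / (σ ^ 2 + t) ^ (n + 1 + 1)
      = (n + 1) * (1 / (σ ^ 2 + t) * ((n.factorial : ℝ) / (σ ^ 2 + t) ^ (n + 1))) := by
        rw [Nat.factorial_succ]; push_cast; field_simp; ring
    _ ≤ (n + 1) * (D * ((-1 : ℝ) ^ n * A)) :=
        mul_le_mul_of_nonneg_left hprod (by positivity)
    _ ≤ _ := by linarith
end
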